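/- Let 𝒫 = [-1,1]² and let x₁, x₂ be independent random points uniformly distributed in 𝒫. Then the random variable V_{𝒫,2} = vol₂(conv{±x₁, ±x₂})/vol₂(𝒫) has density f(t) = 1_{[0,1]}(t) ∫_{2t-1}^{1} (log|s|)(log|2t−s|) ds with respect to Lebesgue measure; that is, for every Borel set B ⊆ ℝ, P(V_{𝒫,2} ∈ B) = ∫_B f(t) dt. -/

import Mathlib

open MeasureTheory Set

noncomputable section

/-- The square `𝒫 = [-1,1]²`. -/
def unitSquare : Set (EuclideanSpace ℝ (Fin 2)) := {x | ∀ i, x i ∈ Set.Icc (-1 : ℝ) 1}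

/-- The normalized area `V_{𝒫,2}` of the symmetric convex hull `conv{±x₁, ±x₂}` of the
points `x 0, x 1`, for the square `𝒫 = [-1,1]²`. -/
def VunitSquare (x : Fin 2 → EuclideanSpace ℝ (Fin 2)) : ℝ :=
  (volume (convexHull ℝ (Set.range x ∪ -Set.range x))).toReal / (volume unitSquare).toReal

/-!
The hull of `±x₁, ±x₂` is the image of the `ℓ¹` unit ball under the matrix with columns `x₁, x₂`,
so `V = |det (x₁, x₂)| / 2`. The determinant `a * d - b * c` is a difference of two independent
products of independent uniform variables on `[-1, 1]`. Disintegrating along `p = a * d` gives such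
a product a density proportional to `log |p|` on `[-1, 1]`. This density is even, so the difference
is distributed as the sum, whose density is the self-convolution. Folding by the absolute value and
rescaling by `1 / 2` gives the claim.
-/

section SymmetricConvexHull

open scoped Nat

variable {ι E : Type*} [Fintype ι] [AddCommGroup E] [Module ℝ E]

lemma sum_smul_mem_of_sum_abs_le_one [Nonempty ι] {C : Set E} (hC : AbsConvex ℝ C)
    {w : ι → ℝ} {z : ι → E} (hw : ∑ i, |w i| ≤ 1) (hz : ∀ i, z i ∈ C) :
    ∑ i, w i • z i ∈ C := by
  obtain ⟨balanced, convex⟩ := hC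
  rcases (Finset.sum_nonneg fun i _ ↦ abs_nonneg (w i)).eq_or_lt with hsum | hsum
  · have hw_zero (i : ι) : w i = 0 := by
      simpa using (Finset.sum_eq_zero_iff_of_nonneg fun i _ ↦ abs_nonneg (w i)).1 hsum.symm i
        (Finset.mem_univ i)
    simpa [hw_zero] using balanced.zero_mem ⟨_, hz (Classical.arbitrary ι)⟩
  · have hmean : Finset.univ.centerMass (fun i ↦ |w i|)
        (fun i ↦ (SignType.sign (w i) : ℝ) • z i) ∈ C :=
      convex.centerMass_mem (fun i _ ↦ abs_nonneg (w i)) hsum fun i _ ↦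
        balanced.smul_mem (by rcases lt_trichotomy (w i) 0 with h | h | h <;> simp [h]) (hz i)
    have hscale : ∑ i, w i • z i = (∑ i, |w i|) •
        Finset.univ.centerMass (fun i ↦ |w i|) (fun i ↦ (SignType.sign (w i) : ℝ) • z i) := by
      simp only [Finset.centerMass, smul_inv_smul₀ hsum.ne', smul_smul, abs_mul_sign]
    rw [hscale]
    exact balanced.smul_mem (by rwa [Real.norm_of_nonneg hsum.le]) hmean

lemma absConvex_image_sum_abs_le_one (L : (ι → ℝ) →ₗ[ℝ] E) :
    AbsConvex ℝ (L '' {u | ∑ i, |u i| ≤ 1}) := by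
  refine ⟨balanced_iff_smul_mem.2 ?_, Convex.linear_image ?_ L⟩
  · rintro a ha _ ⟨u, hu, rfl⟩
    refine ⟨a • u, ?_, map_smul L a u⟩
    simpa [abs_mul, ← Finset.mul_sum] using
      mul_le_one₀ ha (Finset.sum_nonneg fun i _ ↦ abs_nonneg (u i)) hu
  · have hconvex : ConvexOn ℝ univ fun u : ι → ℝ ↦ ∑ i, |u i| := by
      refine ⟨convex_univ, fun u _ v _ a b ha hb _ ↦ ?_⟩
      simp only [smul_eq_mul, Finset.mul_sum, ← Finset.sum_add_distrib]
      refine Finset.sum_le_sum fun i _ ↦ ?_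
      simpa [abs_mul, abs_of_nonneg ha, abs_of_nonneg hb] using abs_add_le (a * u i) (b * v i)
    simpa using hconvex.convex_le 1

theorem convexHull_range_union_neg_eq_image [Nonempty ι] (x : ι → E) :
    convexHull ℝ (range x ∪ -range x) =
      Fintype.linearCombination ℝ x '' {u | ∑ i, |u i| ≤ 1} := by
  classical
  rw [convexHull_union_neg_eq_absConvexHull]
  refine Subset.antisymm (absConvexHull_min ?_ (absConvex_image_sum_abs_le_one _)) ?_
  · rintro _ ⟨i, rfl⟩
    exact ⟨Pi.single i 1, by simp [Pi.single_apply, apply_ite abs], by simp⟩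
  · rintro _ ⟨u, hu, rfl⟩
    exact sum_smul_mem_of_sum_abs_le_one absConvex_absConvexHull hu fun i ↦
      subset_absConvexHull (mem_range_self i)

theorem volume_sum_abs_le_one [Nonempty ι] :
    volume {u : ι → ℝ | ∑ i, |u i| ≤ 1} =
      ENNReal.ofReal (2 ^ Fintype.card ι / (Fintype.card ι)!) := by
  simpa [one_add_one_eq_two, Real.Gamma_nat_eq_factorial] using
    volume_sum_rpow_le (ι := ι) (p := 1) le_rfl 1

theorem volume_convexHull_range_union_neg [Nonempty ι] [DecidableEq ι]
    (x : ι → EuclideanSpace ℝ ι) :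
    volume (convexHull ℝ (range x ∪ -range x)) =
      ENNReal.ofReal |(Matrix.of fun i j ↦ x i j).det| *
        ENNReal.ofReal (2 ^ Fintype.card ι / (Fintype.card ι)!) := by
  set A : Matrix ι ι ℝ := Matrix.of fun i j ↦ x i j
  have hcoord : (WithLp.toLp 2 : (ι → ℝ) → EuclideanSpace ℝ ι) ∘ Matrix.toLin' A.transpose =
      Fintype.linearCombination ℝ x := by
    ext u i
    simp [A, Fintype.linearCombination_apply, Matrix.mulVec, dotProduct, mul_comm]
  have hpreimage : (WithLp.toLp 2 : (ι → ℝ) → EuclideanSpace ℝ ι) ⁻¹'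
      convexHull ℝ (range x ∪ -range x) =
        Matrix.toLin' A.transpose '' {u | ∑ i, |u i| ≤ 1} := by
    rw [convexHull_range_union_neg_eq_image, ← hcoord, image_comp]
    exact preimage_image_eq _ (WithLp.toLp_injective 2)
  rw [← (PiLp.volume_preserving_toLp ι).measure_preimage_emb
      (MeasurableEquiv.toLp 2 (ι → ℝ)).measurableEmbedding, hpreimage,
    Measure.addHaar_image_linearMap, LinearMap.det_toLin', Matrix.det_transpose,
    volume_sum_abs_le_one]

end SymmetricConvexHull

section Density

open Measure
open scoped ENNReal

lemma toReal_withDensity_apply {α : Type*} {mα : MeasurableSpace α} {μ : Measure α}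
    {f : α → ℝ≥0∞} (hf : Measurable f) [IsFiniteMeasure (μ.withDensity f)] {s : Set α}
    (hs : MeasurableSet s) :
    (μ.withDensity f s).toReal = ∫ x in s, (f x).toReal ∂μ := by
  have hfin : ∫⁻ x in s, f x ∂μ ≠ ∞ := by
    rw [← withDensity_apply f hs]
    exact measure_ne_top _ _
  rw [withDensity_apply f hs, integral_toReal hf.aemeasurable (ae_lt_top hf hfin)]

lemma isNegInvariant_withDensity {G : Type*} [AddGroup G] {mG : MeasurableSpace G}
    [MeasurableNeg G] {μ : Measure G} [IsNegInvariant μ] {f : G → ℝ≥0∞} (hf : Measurable f)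
    (heven : f.Even) : IsNegInvariant (μ.withDensity f) := by
  refine ⟨ext_of_lintegral _ fun φ hφ ↦ ?_⟩
  rw [Measure.neg, lintegral_map hφ measurable_neg,
    lintegral_withDensity_eq_lintegral_mul _ hf (by fun_prop),
    lintegral_withDensity_eq_lintegral_mul _ hf hφ, ← lintegral_neg_eq_self]
  simp [heven _]

lemma map_sub_prod_eq_conv {G : Type*} [AddGroup G] {mG : MeasurableSpace G}
    [MeasurableAdd₂ G] [MeasurableNeg G] (μ ν : Measure G) [SFinite μ] [SFinite ν]
    [IsNegInvariant ν] : (μ.prod ν).map (fun z ↦ z.1 - z.2) = μ ∗ ν := by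
  have hneg : MeasurePreserving (Prod.map id Neg.neg) (μ.prod ν) (μ.prod ν) :=
    (MeasurePreserving.id μ).prod (measurePreserving_neg ν)
  nth_rw 1 [← hneg.map_eq]
  rw [map_map (by fun_prop) hneg.measurable, conv]
  simp only [Function.comp_def, Prod.map_fst, Prod.map_snd, id_eq, sub_neg_eq_add]

theorem measurePreserving_prodProdProdComm {α β γ δ : Type*} {_ : MeasurableSpace α}
    {_ : MeasurableSpace β} {_ : MeasurableSpace γ} {_ : MeasurableSpace δ}
    (μ : Measure α) (ν : Measure β) (ρ : Measure γ) (σ : Measure δ)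
    [SFinite μ] [SFinite ν] [SFinite ρ] [SFinite σ] :
    MeasurePreserving (fun z : (α × β) × γ × δ ↦ ((z.1.1, z.2.1), (z.1.2, z.2.2)))
      ((μ.prod ν).prod (ρ.prod σ)) ((μ.prod ρ).prod (ν.prod σ)) := by
  have hmid : MeasurePreserving (fun z : β × γ × δ ↦ (z.2.1, (z.1, z.2.2)))
      (ν.prod (ρ.prod σ)) (ρ.prod (ν.prod σ)) :=
    (measurePreserving_prodAssoc ρ ν σ).comp
      ((measurePreserving_swap.prod (.id σ)).comp (measurePreserving_prodAssoc ν ρ σ).symm)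
  exact (measurePreserving_prodAssoc μ ρ (ν.prod σ)).symm.comp
    (((MeasurePreserving.id μ).prod hmid).comp (measurePreserving_prodAssoc μ ν (ρ.prod σ)))

theorem lintegral_comp_abs (f : ℝ → ℝ≥0∞) : ∫⁻ x, f |x| = 2 * ∫⁻ x in Ici 0, f x := by
  have hpos : ∫⁻ x in Ici (0 : ℝ), f |x| = ∫⁻ x in Ici 0, f x :=
    setLIntegral_congr_fun measurableSet_Ici fun x hx ↦ by rw [abs_of_nonneg hx]
  have hneg : ∫⁻ x in Iio (0 : ℝ), f |x| = ∫⁻ x in Ici 0, f x := by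
    rw [← hpos, ← setLIntegral_congr (Ioi_ae_eq_Ici (a := (0 : ℝ))),
      ← (measurePreserving_neg (volume : Measure ℝ)).setLIntegral_comp_preimage_emb
        (MeasurableEquiv.neg ℝ).measurableEmbedding _ (Ioi 0)]
    simp
  rw [← lintegral_add_compl _ measurableSet_Ici, compl_Ici, hpos, hneg, two_mul]

lemma lintegral_comp_mul_left {c : ℝ} (hc : c ≠ 0) (f : ℝ → ℝ≥0∞) :
    ∫⁻ x, f (c * x) = ENNReal.ofReal |c⁻¹| * ∫⁻ x, f x := by
  rw [← smul_eq_mul, ← lintegral_smul_measure, ← Real.map_volume_mul_left hc]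
  exact (lintegral_map_equiv f (MeasurableEquiv.mulLeft₀ c hc)).symm

theorem map_abs_withDensity {f : ℝ → ℝ≥0∞} (hf : Measurable f) (heven : f.Even) :
    (volume.withDensity f).map abs = volume.withDensity ((Ici 0).indicator fun x ↦ 2 * f x) := by
  refine ext_of_lintegral _ fun φ hφ ↦ ?_
  have habs (x : ℝ) : f |x| = f x := by rcases abs_choice x with h | h <;> simp [h, heven x]
  rw [lintegral_map hφ (by fun_prop), lintegral_withDensity_eq_lintegral_mul _ hf (by fun_prop),
    withDensity_indicator measurableSet_Ici,
    lintegral_withDensity_eq_lintegral_mul _ (hf.const_mul 2) hφ]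
  simp only [Pi.mul_apply, mul_assoc]
  rw [lintegral_const_mul _ (by fun_prop), ← lintegral_comp_abs]
  simp only [habs]

theorem map_mul_left_withDensity {c : ℝ} (hc : c ≠ 0) {f : ℝ → ℝ≥0∞} (hf : Measurable f) :
    (volume.withDensity f).map (c * ·) =
      volume.withDensity fun y ↦ ENNReal.ofReal |c⁻¹| * f (c⁻¹ * y) := by
  refine ext_of_lintegral _ fun φ hφ ↦ ?_
  rw [lintegral_map hφ (by fun_prop), lintegral_withDensity_eq_lintegral_mul _ hf (by fun_prop),
    lintegral_withDensity_eq_lintegral_mul _ (by fun_prop) hφ]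
  simp only [Pi.mul_apply, mul_assoc]
  rw [lintegral_const_mul _ (by fun_prop), ← lintegral_comp_mul_left hc]
  simp only [inv_mul_cancel_left₀ hc]

theorem mconv_withDensity {f g : ℝ → ℝ≥0∞} (hf : Measurable f) (hg : Measurable g) :
    volume.withDensity f ∗ₘ volume.withDensity g =
      volume.withDensity fun p ↦ ∫⁻ a, f a * (ENNReal.ofReal |a⁻¹| * g (a⁻¹ * p)) := by
  refine ext_of_lintegral _ fun φ hφ ↦ ?_
  have hinner : ∀ᵐ a : ℝ, ∫⁻ b, φ (a * b) ∂volume.withDensity g =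
      ∫⁻ p, ENNReal.ofReal |a⁻¹| * g (a⁻¹ * p) * φ p := by
    filter_upwards [ae_ne volume 0] with a ha
    rw [← lintegral_map hφ (measurable_const_mul a), map_mul_left_withDensity ha hg,
      lintegral_withDensity_eq_lintegral_mul _ (by fun_prop) hφ]
    rfl
  have hjoint : Measurable fun z : ℝ × ℝ ↦
    f z.1 * (ENNReal.ofReal |z.1⁻¹| * g (z.1⁻¹ * z.2)) := by fun_prop
  calc ∫⁻ p, φ p ∂(volume.withDensity f ∗ₘ volume.withDensity g)
      = ∫⁻ a, f a * ∫⁻ b, φ (a * b) ∂volume.withDensity g := by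
        rw [lintegral_mconv hφ, lintegral_withDensity_eq_lintegral_mul _ hf (by fun_prop)]
        rfl
    _ = ∫⁻ a, ∫⁻ p, f a * (ENNReal.ofReal |a⁻¹| * g (a⁻¹ * p)) * φ p := by
        refine lintegral_congr_ae (hinner.mono fun a ha ↦ ?_)
        simp only [ha, mul_assoc (f a)]
        rw [lintegral_const_mul _ (by fun_prop)]
    _ = ∫⁻ p, (∫⁻ a, f a * (ENNReal.ofReal |a⁻¹| * g (a⁻¹ * p))) * φ p := by
        rw [lintegral_lintegral_swap (by fun_prop)]
        refine lintegral_congr fun p ↦ lintegral_mul_const _ (by fun_prop)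
    _ = _ := by
        rw [lintegral_withDensity_eq_lintegral_mul _ hjoint.lintegral_prod_left' hφ]
        rfl

end Density

section DeterminantDensity

open Measure
open scoped ENNReal

lemma setLIntegral_Icc_inv {p q : ℝ} (hp : 0 < p) (hq : 0 < q) :
    ∫⁻ a in Icc p q, ENNReal.ofReal a⁻¹ = ENNReal.ofReal (Real.log (q / p)) := by
  rcases le_or_gt p q with hpq | hqp
  · have hint : IntegrableOn (fun a : ℝ ↦ a⁻¹) (Icc p q) :=
      (continuousOn_id.inv₀ fun a ha ↦ (hp.trans_le ha.1).ne').integrableOn_Icc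
    have hnonneg : 0 ≤ᵐ[volume.restrict (Icc p q)] fun a : ℝ ↦ a⁻¹ :=
      (ae_restrict_mem measurableSet_Icc).mono fun a ha ↦ inv_nonneg.2 (hp.trans_le ha.1).le
    rw [← ofReal_integral_eq_lintegral_ofReal hint hnonneg, integral_Icc_eq_integral_Ioc,
      ← intervalIntegral.integral_of_le hpq, integral_inv_of_pos hp hq]
  · have hlog : Real.log (q / p) ≤ 0 :=
      Real.log_nonpos (div_pos hq hp).le ((div_le_one hp).2 hqp.le)
    simp [Icc_eq_empty hqp.not_ge, ENNReal.ofReal_of_nonpos hlog]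

/-- The law of one coordinate of a uniform point of `[-1, 1]²`, left unnormalized (its total mass
is `2`). -/
abbrev symmIntervalMeasure : Measure ℝ := volume.restrict (Icc (-1) 1)

/-- The density of the law of `a * d` for independent `a` and `d` with law `symmIntervalMeasure`.
Truncation by `ENNReal.ofReal` makes it vanish outside `[-1, 1]`. -/
def productDensity (p : ℝ) : ℝ≥0∞ := ENNReal.ofReal (-2 * Real.log |p|)

@[fun_prop]
lemma measurable_productDensity : Measurable productDensity := by
  unfold productDensity
  fun_prop

lemma even_productDensity : productDensity.Even := fun p ↦ by simp [productDensity]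

lemma productDensity_eq_zero {p : ℝ} (hp : p ∉ Icc (-1) 1) : productDensity p = 0 := by
  have hlog : 0 ≤ Real.log |p| := Real.log_nonneg (by rw [mem_Icc, ← abs_le] at hp; linarith)
  exact ENNReal.ofReal_of_nonpos (by linarith)

lemma lintegral_fiber_eq_productDensity {p : ℝ} (hp : p ≠ 0) :
    ∫⁻ a, (Icc (-1) 1).indicator 1 a *
      (ENNReal.ofReal |a⁻¹| * (Icc (-1) 1).indicator 1 (a⁻¹ * p)) = productDensity p := by
  have hp' : 0 < |p| := abs_pos.2 hp
  have hfiber (a : ℝ) : (Icc (-1) 1).indicator 1 a *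
      (ENNReal.ofReal |a⁻¹| * (Icc (-1) 1).indicator 1 (a⁻¹ * p)) =
        (Icc |p| 1).indicator (fun r ↦ ENNReal.ofReal r⁻¹) |a| := by
    rcases eq_or_ne a 0 with rfl | ha
    · simp [hp]
    · have hiff : |a⁻¹ * p| ≤ 1 ↔ |p| ≤ |a| := by
        rw [abs_mul, abs_inv, inv_mul_le_one₀ (abs_pos.2 ha)]
      simp only [indicator_apply, mem_Icc, ← abs_le, hiff, abs_inv]
      split_ifs <;> simp_all
  simp only [hfiber]
  rw [lintegral_comp_abs, setLIntegral_indicator measurableSet_Icc,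
    inter_eq_left.2 (Icc_subset_Ici_self.trans (Ici_subset_Ici.2 hp'.le)),
    setLIntegral_Icc_inv hp' one_pos,
    ← ENNReal.ofReal_ofNat 2, ← ENNReal.ofReal_mul zero_le_two, productDensity]
  simp

theorem mconv_symmIntervalMeasure :
    symmIntervalMeasure ∗ₘ symmIntervalMeasure = volume.withDensity productDensity := by
  have hmeas : Measurable ((Icc (-1 : ℝ) 1).indicator (1 : ℝ → ℝ≥0∞)) :=
    measurable_one.indicator measurableSet_Icc
  rw [symmIntervalMeasure, ← withDensity_indicator_one measurableSet_Icc,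
    mconv_withDensity hmeas hmeas]
  exact withDensity_congr_ae <|
    (ae_ne volume 0).mono fun p hp ↦ lintegral_fiber_eq_productDensity hp

/-- The density of the law of `a * d - b * c` for independent `a`, `b`, `c` and `d` with law
`symmIntervalMeasure`. -/
def determinantDensity : ℝ → ℝ≥0∞ := productDensity ⋆ₗ productDensity

@[fun_prop]
lemma measurable_determinantDensity : Measurable determinantDensity :=
  measurable_lconvolution volume measurable_productDensity measurable_productDensity

lemma even_determinantDensity : determinantDensity.Even := fun u ↦ by
  simp only [determinantDensity, lconvolution_def]
  rw [← lintegral_neg_eq_self]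
  refine lintegral_congr fun s ↦ ?_
  rw [even_productDensity, ← even_productDensity (-s + u), neg_add]

theorem map_sub_mul_mul_eq_withDensity :
    ((symmIntervalMeasure.prod symmIntervalMeasure).prod
        (symmIntervalMeasure.prod symmIntervalMeasure)).map
      (fun z ↦ z.1.1 * z.1.2 - z.2.1 * z.2.2) = volume.withDensity determinantDensity := by
  have hsymm : IsNegInvariant (volume.withDensity productDensity) :=
    isNegInvariant_withDensity measurable_productDensity even_productDensity
  rw [determinantDensity,
    ← conv_withDensity_eq_lconvolution measurable_productDensity measurable_productDensity,
    ← map_sub_prod_eq_conv, ← mconv_symmIntervalMeasure, mconv,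
    map_prod_map _ _ (by fun_prop) (by fun_prop), map_map (by fun_prop) (by fun_prop)]
  rfl

lemma productDensity_mul_productDensity {u s : ℝ} (hu : 0 ≤ u) :
    productDensity s * productDensity (-s + u) =
      (Icc (u - 1) 1).indicator
        (fun s ↦ ENNReal.ofReal (4 * (Real.log |s| * Real.log |u - s|))) s := by
  by_cases hs : s ∈ Icc (u - 1) 1
  · have hlog : Real.log |s| ≤ 0 :=
      Real.log_nonpos (abs_nonneg s) (abs_le.2 ⟨by linarith [hs.1], hs.2⟩)
    rw [indicator_of_mem hs, productDensity, productDensity, ← ENNReal.ofReal_mul (by linarith),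
      neg_add_eq_sub]
    ring_nf
  · rw [indicator_of_notMem hs, mul_eq_zero]
    by_contra! hne
    have hs' := not_imp_comm.1 productDensity_eq_zero hne.1
    have hsu := not_imp_comm.1 productDensity_eq_zero hne.2
    exact hs ⟨by linarith [hsu.2], hs'.2⟩

lemma determinantDensity_of_nonneg {u : ℝ} (hu : 0 ≤ u) :
    determinantDensity u =
      ∫⁻ s in Icc (u - 1) 1, ENNReal.ofReal (4 * (Real.log |s| * Real.log |u - s|)) := by
  simp only [determinantDensity, lconvolution_def, productDensity_mul_productDensity hu]
  exact lintegral_indicator measurableSet_Icc _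

lemma toReal_determinantDensity {u : ℝ} (hu : u ∈ Icc 0 2) :
    (determinantDensity u).toReal =
      4 * ∫ s in (u - 1)..1, Real.log |s| * Real.log |u - s| := by
  have hnonneg : ∀ᵐ s ∂volume.restrict (Icc (u - 1) 1),
      0 ≤ 4 * (Real.log |s| * Real.log |u - s|) := by
    filter_upwards [ae_restrict_mem measurableSet_Icc] with s hs
    have hlog_left : Real.log |s| ≤ 0 :=
      Real.log_nonpos (abs_nonneg _) (abs_le.2 ⟨by linarith [hu.1, hs.1], hs.2⟩)
    have hlog_right : Real.log |u - s| ≤ 0 :=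
      Real.log_nonpos (abs_nonneg _) (abs_le.2 ⟨by linarith [hu.1, hs.2], by linarith [hs.1]⟩)
    linarith [mul_nonneg_of_nonpos_of_nonpos hlog_left hlog_right]
  rw [determinantDensity_of_nonneg hu.1, ← integral_eq_lintegral_of_nonneg_ae hnonneg
    (by fun_prop), integral_const_mul, integral_Icc_eq_integral_Ioc,
    intervalIntegral.integral_of_le (by linarith [hu.2])]

lemma determinantDensity_eq_zero {u : ℝ} (hu : 2 < u) : determinantDensity u = 0 := by
  rw [determinantDensity_of_nonneg (by linarith), Icc_eq_empty (by linarith), restrict_empty,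
    lintegral_zero_measure]

end DeterminantDensity

section NormalizedArea

open Measure
open scoped ENNReal

theorem volume_unitSquare : volume unitSquare = 4 := by
  have hpreimage : unitSquare = WithLp.ofLp ⁻¹' Icc (fun _ : Fin 2 ↦ (-1 : ℝ)) fun _ ↦ 1 := by
    ext x
    simp [unitSquare, Pi.le_def, forall_and]
  rw [hpreimage, (PiLp.volume_preserving_ofLp (Fin 2)).measure_preimage
    measurableSet_Icc.nullMeasurableSet, Real.volume_Icc_pi]
  norm_num

theorem VunitSquare_eq_half_abs_det (x : Fin 2 → EuclideanSpace ℝ (Fin 2)) :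
    VunitSquare x = 2⁻¹ * |x 0 0 * x 1 1 - x 0 1 * x 1 0| := by
  rw [VunitSquare, volume_convexHull_range_union_neg, volume_unitSquare, Matrix.det_fin_two,
    Fintype.card_fin, ENNReal.toReal_mul, ENNReal.toReal_ofReal (abs_nonneg _),
    ENNReal.toReal_ofReal (by positivity), ENNReal.toReal_ofNat, Nat.factorial_two, Nat.cast_ofNat]
  simp only [Matrix.of_apply]
  ring

lemma measurable_VunitSquare : Measurable VunitSquare := by
  rw [funext VunitSquare_eq_half_abs_det]
  fun_prop

lemma measurePreserving_coord_prod :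
    MeasurePreserving (fun y : EuclideanSpace ℝ (Fin 2) ↦ (y 0, y 1))
      (volume.restrict unitSquare) (symmIntervalMeasure.prod symmIntervalMeasure) := by
  have hpreimage : unitSquare = (fun y : EuclideanSpace ℝ (Fin 2) ↦ (y 0, y 1)) ⁻¹'
      (Icc (-1) 1 ×ˢ Icc (-1) 1) := by
    ext y
    simp only [unitSquare, Fin.forall_fin_two, mem_ofPred_eq, mem_preimage, mem_prod]
  rw [symmIntervalMeasure, prod_restrict, hpreimage]
  exact ((volume_preserving_finTwoArrow ℝ).comp
    (PiLp.volume_preserving_ofLp (Fin 2))).restrict_preimage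
      (measurableSet_Icc.prod measurableSet_Icc)

/-- The joint law of two independent uniform points of `𝒫 = [-1,1]²`, left unnormalized (its total
mass is `16`). -/
def pairMeasure : Measure (Fin 2 → EuclideanSpace ℝ (Fin 2)) :=
  volume.restrict (univ.pi fun _ ↦ unitSquare)

instance isFiniteMeasure_pairMeasure : IsFiniteMeasure pairMeasure where
  measure_univ_lt_top := by
    rw [pairMeasure, restrict_apply_univ, volume_pi_pi]
    simp [volume_unitSquare, lt_top_iff_ne_top]

theorem measurePreserving_detTerms :
    MeasurePreserving
      (fun x : Fin 2 → EuclideanSpace ℝ (Fin 2) ↦ ((x 0 0, x 1 1), (x 0 1, x 1 0)))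
      pairMeasure
      ((symmIntervalMeasure.prod symmIntervalMeasure).prod
        (symmIntervalMeasure.prod symmIntervalMeasure)) := by
  have hpair : pairMeasure = Measure.pi fun _ : Fin 2 ↦ volume.restrict unitSquare := by
    rw [pairMeasure, volume_pi, restrict_pi_pi]
  rw [hpair]
  exact (measurePreserving_prodProdProdComm _ _ _ _).comp
    ((measurePreserving_coord_prod.prod
      (measurePreserving_swap.comp measurePreserving_coord_prod)).comp
      (measurePreserving_finTwoArrow (volume.restrict unitSquare)))

/-- The density of the law of `V_{𝒫,2}` under `pairMeasure`, hence `16` times its probability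
density. -/
def areaDensity : ℝ → ℝ≥0∞ := (Ici 0).indicator fun t ↦ 4 * determinantDensity (2 * t)

lemma measurable_areaDensity : Measurable areaDensity :=
  Measurable.indicator (by fun_prop) measurableSet_Ici

theorem map_VunitSquare :
    pairMeasure.map VunitSquare = volume.withDensity areaDensity := by
  have hcomp : VunitSquare = (fun u ↦ 2⁻¹ * u) ∘ abs ∘
      (fun z : (ℝ × ℝ) × ℝ × ℝ ↦ z.1.1 * z.1.2 - z.2.1 * z.2.2) ∘
      fun x ↦ ((x 0 0, x 1 1), (x 0 1, x 1 0)) := funext VunitSquare_eq_half_abs_det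
  rw [hcomp, ← map_map (by fun_prop) (by fun_prop), ← map_map (by fun_prop) (by fun_prop),
    ← map_map (by fun_prop) (by fun_prop), measurePreserving_detTerms.map_eq,
    map_sub_mul_mul_eq_withDensity,
    map_abs_withDensity measurable_determinantDensity even_determinantDensity,
    map_mul_left_withDensity (by norm_num)
      (Measurable.indicator (by fun_prop) measurableSet_Ici)]
  congr 1 with t
  rw [inv_inv, abs_two, ENNReal.ofReal_ofNat, areaDensity, indicator_apply, indicator_apply]
  simp only [mem_Ici, mul_nonneg_iff_of_pos_left (zero_lt_two' ℝ), mul_ite, ← mul_assoc, mul_zero]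
  norm_num

lemma toReal_areaDensity (t : ℝ) :
    (areaDensity t).toReal = 16 * (Icc (0 : ℝ) 1).indicator
      (fun t ↦ ∫ s in (2 * t - 1)..1, Real.log |s| * Real.log |2 * t - s|) t := by
  rcases lt_or_ge t 0 with hneg | hnonneg
  · have ht : t ∉ Icc (0 : ℝ) 1 := fun ht ↦ hneg.not_ge ht.1
    rw [areaDensity, indicator_of_notMem (notMem_Ici.2 hneg), indicator_of_notMem ht,
      ENNReal.toReal_zero, mul_zero]
  rw [areaDensity, indicator_of_mem (mem_Ici.2 hnonneg), ENNReal.toReal_mul, ENNReal.toReal_ofNat]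
  rcases le_or_gt t 1 with hle | hgt
  · have ht : t ∈ Icc (0 : ℝ) 1 := ⟨hnonneg, hle⟩
    rw [indicator_of_mem ht,
      toReal_determinantDensity ⟨by linarith, by linarith⟩, ← mul_assoc]
    norm_num
  · have ht : t ∉ Icc (0 : ℝ) 1 := fun ht ↦ hgt.not_ge ht.2
    rw [determinantDensity_eq_zero (by linarith), indicator_of_notMem ht,
      ENNReal.toReal_zero, mul_zero, mul_zero]

end NormalizedArea

/-- For `x₁, x₂` independent uniform random points in the square `𝒫 = [-1,1]²`, the random
variable `V_{𝒫,2} = vol₂(conv{±x₁, ±x₂}) / vol₂(𝒫)` has density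
`t ↦ 1_{[0,1]}(t) ∫_{2t-1}^{1} (log|s|)(log|2t−s|) ds` with respect to Lebesgue measure. -/
theorem density_V_square
    (B : Set ℝ) (hB : MeasurableSet B) :
    (volume {x : Fin 2 → EuclideanSpace ℝ (Fin 2) |
          (∀ i, x i ∈ unitSquare) ∧ VunitSquare x ∈ B}).toReal /
        (volume unitSquare).toReal ^ 2 =
      ∫ t in B, Set.indicator (Set.Icc (0 : ℝ) 1)
        (fun t => ∫ s in (2 * t - 1)..(1 : ℝ), Real.log |s| * Real.log |2 * t - s|) t := by
  have hevent : volume {x : Fin 2 → EuclideanSpace ℝ (Fin 2) |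
      (∀ i, x i ∈ unitSquare) ∧ VunitSquare x ∈ B} = pairMeasure.map VunitSquare B := by
    rw [Measure.map_apply measurable_VunitSquare hB, pairMeasure,
      Measure.restrict_apply (measurable_VunitSquare hB), inter_comm]
    congr 1 with x
    simp
  have hfinite : IsFiniteMeasure (volume.withDensity areaDensity) := by
    rw [← map_VunitSquare]
    infer_instance
  rw [hevent, map_VunitSquare, toReal_withDensity_apply measurable_areaDensity hB,
    volume_unitSquare]
  simp only [toReal_areaDensity, integral_const_mul, ENNReal.toReal_ofNat]
  ring
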